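/- Let ε > 0 and T > 0, and let η, u : ℝ × ℝ → ℝ (time × space) be C^∞ functions satisfying ∂_t η + ∂_x u + ε ∂_x(ηu) − ε ∂_x³u = 0 and ∂_t u + ∂_x η + ε u ∂_x u = 0 for all (t,x). Suppose there is a compact set K ⊂ ℝ such that for every t ∈ [0,T] the functions η(t,·) and u(t,·) vanish outside K. Then for every t ∈ (0,T), the function t ↦ (1/2)∫_ℝ ( η² + u² + (∂_xη)² + (1+ε)(∂_xu)² + ε(∂_x²u)² ) dx is differentiable at t with derivative equal to −ε ∫_ℝ [ (1/2)(∂_xu)η² + (3/2)(∂_xu)(∂_xη)² + η(∂_xη)(∂_x²u) + ((1+ε)/2)(∂_xu)³ + (5ε/2)(∂_xu)(∂_x²u)² ] dx. -/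

import Mathlib

open MeasureTheory

/-- Partial derivative in the first (time) variable of `f : ℝ → ℝ → ℝ`. -/
noncomputable def dt1 (f : ℝ → ℝ → ℝ) : ℝ → ℝ → ℝ := fun t x => deriv (fun s => f s x) t

/-- Partial derivative in the second (space) variable of `f : ℝ → ℝ → ℝ`. -/
noncomputable def dx1 (f : ℝ → ℝ → ℝ) : ℝ → ℝ → ℝ := fun t x => deriv (fun y => f t y) x

/-!
Pairing the first equation with `η - η_xx` and the second with
`(1 - ε ∂_x²)(u - u_xx) = u - (1 + ε) u_xx + ε u_xxxx` turns the system into a local balance law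
`∂_t e = ∂_x F - ε r`, where `e` is the energy density. The flux `F` collects the boundary terms of
all integrations by parts: those that move the `x`-derivatives of `∂_t η` and `∂_t u` onto the
multipliers, those of the linear terms, which are skew and produce nothing, and those of the
quadratic terms, which leave the cubic remainder `r`. Since everything is supported in a fixed
compact set, integrating in `x` kills `∂_x F`.
-/

open Filter
open scoped Topology

section ParametricIntegral

variable {𝕜 X E : Type*} [RCLike 𝕜] [NormedAddCommGroup E] [NormedSpace ℝ E] [NormedSpace 𝕜 E]
  [TopologicalSpace X] [T2Space X] [SecondCountableTopologyEither X E] [MeasurableSpace X]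
  [OpensMeasurableSpace X] {μ : Measure X} [IsFiniteMeasureOnCompacts μ]

theorem hasDerivAt_integral_of_eventually_eq_zero_off_compact {f f' : 𝕜 → X → E} {t : 𝕜}
    {K : Set X} (hK : IsCompact K) (hf : ∀ s, Continuous (f s)) (hf' : Continuous ↿f')
    (hderiv : ∀ s x, HasDerivAt (f · x) (f' s x) s)
    (hzero : ∀ᶠ s in 𝓝 t, ∀ x ∉ K, f s x = 0) :
    Integrable (f' t) μ ∧ HasDerivAt (fun s => ∫ x, f s x ∂μ) (∫ x, f' t x ∂μ) t := by
  have hzero' : ∀ᶠ s in 𝓝 t, ∀ x ∉ K, f' s x = 0 := by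
    filter_upwards [hzero.eventually_nhds] with s hs x hx
    have hfx : (f · x) =ᶠ[𝓝 s] fun _ => 0 := hs.mono fun r hr => hr x hx
    exact (hderiv s x).unique ((hasDerivAt_const s 0).congr_of_eventuallyEq hfx)
  obtain ⟨δ, hδ, hzero_ball⟩ := Metric.nhds_basis_closedBall.eventually_iff.1 hzero'
  obtain ⟨C, hC⟩ := ((isCompact_closedBall t δ).prod hK).exists_bound_of_continuousOn
    hf'.continuousOn
  have hbound : ∀ x, ∀ s ∈ Metric.closedBall t δ, ‖f' s x‖ ≤ K.indicator (fun _ => C) x := by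
    intro x s hs
    by_cases hx : x ∈ K
    · rw [Set.indicator_of_mem hx]
      exact hC (s, x) ⟨hs, hx⟩
    · simp [hx, hzero_ball hs x hx]
  have hbound_int : Integrable (K.indicator fun _ => C) μ :=
    (integrable_indicator_iff hK.measurableSet).2 (integrableOn_const hK.measure_lt_top.ne)
  exact hasDerivAt_integral_of_dominated_loc_of_deriv_le (Metric.closedBall_mem_nhds t hδ)
    (.of_forall fun s => (hf s).aestronglyMeasurable)
    ((hf t).integrable_of_hasCompactSupport (.intro hK hzero.self_of_nhds))
    (hf'.comp (Continuous.prodMk_right t)).aestronglyMeasurable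
    (.of_forall hbound) hbound_int (.of_forall fun x s _ => hderiv s x)

end ParametricIntegral

section PartialDerivatives

variable {f : ℝ → ℝ → ℝ} {t x : ℝ} {m n : WithTop ℕ∞}

theorem hasDerivAt_fst_fderiv (hf : DifferentiableAt ℝ ↿f (t, x)) :
    HasDerivAt (f · x) (fderiv ℝ ↿f (t, x) (1, 0)) t :=
  hf.hasFDerivAt.comp_hasDerivAt (f := fun s => (s, x)) t
    ((hasDerivAt_id' t).prodMk (hasDerivAt_const t x))

theorem hasDerivAt_snd_fderiv (hf : DifferentiableAt ℝ ↿f (t, x)) :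
    HasDerivAt (f t) (fderiv ℝ ↿f (t, x) (0, 1)) x :=
  hf.hasFDerivAt.comp_hasDerivAt x ((hasDerivAt_const x t).prodMk (hasDerivAt_id' x))

theorem hasDerivAt_dt1 (hf : ContDiff ℝ n ↿f) (hn : n ≠ 0) (t x : ℝ) :
    HasDerivAt (f · x) (dt1 f t x) t :=
  (hasDerivAt_fst_fderiv (hf.differentiable hn _)).differentiableAt.hasDerivAt

theorem hasDerivAt_dx1 (hf : ContDiff ℝ n ↿f) (hn : n ≠ 0) (t x : ℝ) :
    HasDerivAt (f t) (dx1 f t x) x :=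
  (hasDerivAt_snd_fderiv (hf.differentiable hn _)).differentiableAt.hasDerivAt

theorem uncurry_dt1_eq_fderiv (hf : Differentiable ℝ ↿f) :
    ↿(dt1 f) = fun p => fderiv ℝ ↿f p (1, 0) :=
  funext fun p => (hasDerivAt_fst_fderiv (hf p)).deriv

theorem uncurry_dx1_eq_fderiv (hf : Differentiable ℝ ↿f) :
    ↿(dx1 f) = fun p => fderiv ℝ ↿f p (0, 1) :=
  funext fun p => (hasDerivAt_snd_fderiv (hf p)).deriv

theorem contDiff_dt1 (hf : ContDiff ℝ n ↿f) (hmn : m + 1 ≤ n) : ContDiff ℝ m ↿(dt1 f) := by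
  rw [uncurry_dt1_eq_fderiv ((hf.of_le hmn).differentiable (by simp))]
  exact (hf.fderiv_right hmn).clm_apply contDiff_const

theorem contDiff_dx1 (hf : ContDiff ℝ n ↿f) (hmn : m + 1 ≤ n) : ContDiff ℝ m ↿(dx1 f) := by
  rw [uncurry_dx1_eq_fderiv ((hf.of_le hmn).differentiable (by simp))]
  exact (hf.fderiv_right hmn).clm_apply contDiff_const

theorem dt1_dx1_comm (hf : ContDiff ℝ 2 ↿f) : dt1 (dx1 f) = dx1 (dt1 f) := by
  ext t x
  have hf_diff : Differentiable ℝ ↿f := hf.differentiable (by simp)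
  have hfderiv : DifferentiableAt ℝ (fderiv ℝ ↿f) (t, x) :=
    (hf.fderiv_right (m := 1) (by norm_num)).differentiable (by simp) _
  have hsymm : IsSymmSndFDerivAt ℝ ↿f (t, x) := hf.contDiffAt.isSymmSndFDerivAt (by simp)
  have hdx : DifferentiableAt ℝ ↿(dx1 f) (t, x) :=
    (contDiff_dx1 hf (m := 1) (by norm_num)).differentiable (by simp) _
  have hdt : DifferentiableAt ℝ ↿(dt1 f) (t, x) :=
    (contDiff_dt1 hf (m := 1) (by norm_num)).differentiable (by simp) _
  calc dt1 (dx1 f) t x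
      = fderiv ℝ ↿(dx1 f) (t, x) (1, 0) := (hasDerivAt_fst_fderiv hdx).deriv
    _ = fderiv ℝ (fderiv ℝ ↿f) (t, x) (1, 0) (0, 1) := by
      rw [uncurry_dx1_eq_fderiv hf_diff, fderiv_clm_apply hfderiv (by fun_prop)]
      simp
    _ = fderiv ℝ (fderiv ℝ ↿f) (t, x) (0, 1) (1, 0) := hsymm (1, 0) (0, 1)
    _ = fderiv ℝ ↿(dt1 f) (t, x) (0, 1) := by
      rw [uncurry_dt1_eq_fderiv hf_diff, fderiv_clm_apply hfderiv (by fun_prop)]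
      simp
    _ = dx1 (dt1 f) t x := (hasDerivAt_snd_fderiv hdt).deriv.symm

theorem dx1_eq_zero_of_notMem {K : Set ℝ} (hK : IsClosed K) (hf : ∀ x ∉ K, f t x = 0) :
    ∀ x ∉ K, dx1 f t x = 0 :=
  fun _ hx => deriv_of_notMem_tsupport fun hx' =>
    hx (closure_minimal (Function.support_subset_iff'.2 hf) hK hx')

theorem hasDerivAt_integral_of_balance_law {e : ℝ → ℝ → ℝ} {F r : ℝ → ℝ} {K : Set ℝ}
    (hK : IsCompact K) (he : ContDiff ℝ 1 ↿e) (he_zero : ∀ᶠ s in 𝓝 t, ∀ x ∉ K, e s x = 0)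
    (hr : Continuous r) (hr_supp : HasCompactSupport r) (hF_supp : HasCompactSupport F)
    (hF : ∀ x, HasDerivAt F (dt1 e t x - r x) x) :
    HasDerivAt (fun s => ∫ x, e s x) (∫ x, r x) t := by
  have he_slice (s : ℝ) : Continuous (e s) := he.continuous.comp (Continuous.prodMk_right s)
  obtain ⟨hdt_int, hderiv⟩ := hasDerivAt_integral_of_eventually_eq_zero_off_compact (μ := volume)
    hK he_slice (contDiff_dt1 he (m := 0) (by simp)).continuous
    (hasDerivAt_dt1 he one_ne_zero) he_zero
  have hr_int : Integrable r := hr.integrable_of_hasCompactSupport hr_supp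
  have hF_cont : Continuous F := continuous_iff_continuousAt.2 fun x => (hF x).continuousAt
  have hflux : ∫ x, (dt1 e t x - r x) = 0 :=
    integral_eq_zero_of_hasDerivAt_of_integrable hF (hdt_int.sub hr_int)
      (hF_cont.integrable_of_hasCompactSupport hF_supp)
  rw [integral_sub hdt_int hr_int, sub_eq_zero] at hflux
  rwa [← hflux]

end PartialDerivatives

section IntegrationByParts

-- Subscripts count `x`-derivatives, and `p`, `q` play the roles of `∂_t η`, `∂_t u`. The
-- multipliers are `η - η₂` and `u - (1 + ε) u₂ + ε u₄`.
variable {η η₁ u u₁ u₂ u₃ : ℝ → ℝ} {η₂ u₄ x : ℝ}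

theorem hasDerivAt_flux_of_multipliers (ε : ℝ) {p q q₁ : ℝ → ℝ} {p₁ q₂ : ℝ}
    (hη₁ : HasDerivAt η₁ η₂ x) (hu₁ : HasDerivAt u₁ (u₂ x) x) (hu₂ : HasDerivAt u₂ (u₃ x) x)
    (hu₃ : HasDerivAt u₃ u₄ x)
    (hp : HasDerivAt p p₁ x) (hq : HasDerivAt q (q₁ x) x) (hq₁ : HasDerivAt q₁ q₂ x) :
    HasDerivAt
      (fun y => η₁ y * p y + (1 + ε) * (u₁ y * q y) + ε * (u₂ y * q₁ y - u₃ y * q y))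
      (η x * p x + u x * q x + η₁ x * p₁ + (1 + ε) * (u₁ x * q₁ x) + ε * (u₂ x * q₂)
        - ((η x - η₂) * p x + (u x - (1 + ε) * u₂ x + ε * u₄) * q x)) x :=
  (((hη₁.fun_mul hp).fun_add ((hu₁.fun_mul hq).const_mul (1 + ε))).fun_add
    (((hu₂.fun_mul hq₁).fun_sub (hu₃.fun_mul hq)).const_mul ε)).congr_deriv (by ring)

theorem hasDerivAt_flux_of_linear_terms (ε : ℝ)
    (hη : HasDerivAt η (η₁ x) x) (hη₁ : HasDerivAt η₁ η₂ x)
    (hu : HasDerivAt u (u₁ x) x) (hu₁ : HasDerivAt u₁ (u₂ x) x) (hu₂ : HasDerivAt u₂ (u₃ x) x)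
    (hu₃ : HasDerivAt u₃ u₄ x) :
    HasDerivAt (fun y => η₁ y * u₁ y - η y * u y + ε * (η y * u₂ y - η₁ y * u₃ y))
      ((η x - η₂) * (ε * u₃ x - u₁ x) + (u x - (1 + ε) * u₂ x + ε * u₄) * -η₁ x) x :=
  (((hη₁.fun_mul hu₁).fun_sub (hη.fun_mul hu)).fun_add
    (((hη.fun_mul hu₂).fun_sub (hη₁.fun_mul hu₃)).const_mul ε)).congr_deriv (by ring)

theorem hasDerivAt_flux_of_elevation_transport
    (hη : HasDerivAt η (η₁ x) x) (hη₁ : HasDerivAt η₁ η₂ x)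
    (hu : HasDerivAt u (u₁ x) x) (hu₁ : HasDerivAt u₁ (u₂ x) x) :
    HasDerivAt
      (fun y => (1 / 2) * (η₁ y ^ 2 * u y) - (1 / 2) * (η y ^ 2 * u y) + η y * η₁ y * u₁ y)
      ((η x - η₂) * -(η₁ x * u x + η x * u₁ x)
        + ((1 / 2) * u₁ x * η x ^ 2 + (3 / 2) * u₁ x * η₁ x ^ 2 + η x * η₁ x * u₂ x)) x :=
  (((((hη₁.fun_pow 2).fun_mul hu).const_mul (1 / 2)).fun_sub
    (((hη.fun_pow 2).fun_mul hu).const_mul (1 / 2))).fun_add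
      ((hη.fun_mul hη₁).fun_mul hu₁)).congr_deriv (by push_cast; ring)

theorem hasDerivAt_flux_of_velocity_transport (ε : ℝ)
    (hu : HasDerivAt u (u₁ x) x) (hu₁ : HasDerivAt u₁ (u₂ x) x) (hu₂ : HasDerivAt u₂ (u₃ x) x)
    (hu₃ : HasDerivAt u₃ u₄ x) :
    HasDerivAt
      (fun y => (1 + ε) / 2 * (u y * u₁ y ^ 2) - (1 / 3) * u y ^ 3
        + ε * ((1 / 2) * (u y * u₂ y ^ 2) + u₁ y ^ 2 * u₂ y - u y * u₁ y * u₃ y))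
      ((u x - (1 + ε) * u₂ x + ε * u₄) * -(u x * u₁ x)
        + ((1 + ε) / 2 * u₁ x ^ 3 + 5 * ε / 2 * u₁ x * u₂ x ^ 2)) x :=
  ((((hu.fun_mul (hu₁.fun_pow 2)).const_mul ((1 + ε) / 2)).fun_sub
    ((hu.fun_pow 3).const_mul (1 / 3))).fun_add
      (((((hu.fun_mul (hu₂.fun_pow 2)).const_mul (1 / 2)).fun_add
        ((hu₁.fun_pow 2).fun_mul hu₂)).fun_sub
          ((hu.fun_mul hu₁).fun_mul hu₃)).const_mul ε)).congr_deriv (by push_cast; ring)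

end IntegrationByParts

section Boussinesq

/-- The energy density `(η² + u² + η_x² + (1 + ε) u_x² + ε u_xx²) / 2` of the Boussinesq system. -/
noncomputable def energyDensity (ε : ℝ) (η u : ℝ → ℝ → ℝ) (t x : ℝ) : ℝ :=
  (1 / 2) * (η t x ^ 2 + u t x ^ 2 + dx1 η t x ^ 2
    + (1 + ε) * dx1 u t x ^ 2 + ε * dx1 (dx1 u) t x ^ 2)

/-- The cubic density that the quadratic terms of the system leave behind after integration by
parts: the energy changes at the rate `-ε` times its integral. -/
noncomputable def cubicRemainder (ε : ℝ) (η u : ℝ → ℝ → ℝ) (t x : ℝ) : ℝ :=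
  (1 / 2) * dx1 u t x * η t x ^ 2
    + (3 / 2) * dx1 u t x * dx1 η t x ^ 2
    + η t x * dx1 η t x * dx1 (dx1 u) t x
    + ((1 + ε) / 2) * dx1 u t x ^ 3
    + (5 * ε / 2) * dx1 u t x * dx1 (dx1 u) t x ^ 2

/-- The flux of `energyDensity` along solutions of the system: the sum of the fluxes of the
multipliers, of the linear terms, and of the quadratic terms `∂_x(ηu)` and `u ∂_x u`. -/
noncomputable def energyFlux (ε : ℝ) (η u : ℝ → ℝ → ℝ) (t x : ℝ) : ℝ :=
  (dx1 η t x * dt1 η t x + (1 + ε) * (dx1 u t x * dt1 u t x)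
      + ε * (dx1 (dx1 u) t x * dx1 (dt1 u) t x - dx1 (dx1 (dx1 u)) t x * dt1 u t x))
    + (dx1 η t x * dx1 u t x - η t x * u t x
      + ε * (η t x * dx1 (dx1 u) t x - dx1 η t x * dx1 (dx1 (dx1 u)) t x))
    + ε * (((1 / 2) * (dx1 η t x ^ 2 * u t x) - (1 / 2) * (η t x ^ 2 * u t x)
        + η t x * dx1 η t x * dx1 u t x)
      + ((1 + ε) / 2 * (u t x * dx1 u t x ^ 2) - (1 / 3) * u t x ^ 3
        + ε * ((1 / 2) * (u t x * dx1 (dx1 u) t x ^ 2) + dx1 u t x ^ 2 * dx1 (dx1 u) t x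
          - u t x * dx1 u t x * dx1 (dx1 (dx1 u)) t x)))

variable (ε : ℝ) {η u : ℝ → ℝ → ℝ} {t x : ℝ}

theorem contDiff_energyDensity (hη : ContDiff ℝ 2 ↿η) (hu : ContDiff ℝ 3 ↿u) :
    ContDiff ℝ 1 ↿(energyDensity ε η u) := by
  have hη₁ : ContDiff ℝ 1 ↿(dx1 η) := contDiff_dx1 hη (by norm_num)
  have hu₁ : ContDiff ℝ 2 ↿(dx1 u) := contDiff_dx1 hu (by norm_num)
  have hu₂ : ContDiff ℝ 1 ↿(dx1 (dx1 u)) := contDiff_dx1 hu₁ (by norm_num)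
  have hη' : ContDiff ℝ 1 ↿η := hη.of_le (by norm_num)
  have hu' : ContDiff ℝ 1 ↿u := hu.of_le (by norm_num)
  have hu₁' : ContDiff ℝ 1 ↿(dx1 u) := hu₁.of_le (by norm_num)
  exact contDiff_const.mul (((((hη'.pow 2).add (hu'.pow 2)).add (hη₁.pow 2)).add
    (contDiff_const.mul (hu₁'.pow 2))).add (contDiff_const.mul (hu₂.pow 2)))

theorem continuous_cubicRemainder (hη : ContDiff ℝ 1 ↿η) (hu : ContDiff ℝ 2 ↿u) :
    Continuous (cubicRemainder ε η u t) := by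
  have hu₁ : ContDiff ℝ 1 ↿(dx1 u) := contDiff_dx1 hu (by norm_num)
  have slice {f : ℝ → ℝ → ℝ} (hf : ContDiff ℝ 0 ↿f) : Continuous (f t) :=
    hf.continuous.comp (Continuous.prodMk_right t)
  have hη_cont := slice (hη.of_le zero_le_one)
  have hη₁_cont := slice (contDiff_dx1 hη (by simp))
  have hu₁_cont := slice (hu₁.of_le zero_le_one)
  have hu₂_cont := slice (contDiff_dx1 hu₁ (by simp))
  unfold cubicRemainder
  fun_prop

theorem dt1_energyDensity (hη : ContDiff ℝ 2 ↿η) (hu : ContDiff ℝ 3 ↿u) :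
    dt1 (energyDensity ε η u) t x =
      η t x * dt1 η t x + u t x * dt1 u t x + dx1 η t x * dx1 (dt1 η) t x
        + (1 + ε) * (dx1 u t x * dx1 (dt1 u) t x)
        + ε * (dx1 (dx1 u) t x * dx1 (dx1 (dt1 u)) t x) := by
  have hη₁ : ContDiff ℝ 1 ↿(dx1 η) := contDiff_dx1 hη (by norm_num)
  have hu₁ : ContDiff ℝ 2 ↿(dx1 u) := contDiff_dx1 hu (by norm_num)
  have hu₂ : ContDiff ℝ 1 ↿(dx1 (dx1 u)) := contDiff_dx1 hu₁ (by norm_num)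
  have hη_t := hasDerivAt_dt1 hη two_ne_zero t x
  have hu_t := hasDerivAt_dt1 hu three_ne_zero t x
  have hη₁_t := hasDerivAt_dt1 hη₁ one_ne_zero t x
  have hu₁_t := hasDerivAt_dt1 hu₁ two_ne_zero t x
  have hu₂_t := hasDerivAt_dt1 hu₂ one_ne_zero t x
  rw [dt1_dx1_comm hη] at hη₁_t
  rw [dt1_dx1_comm hu₁, dt1_dx1_comm (hu.of_le (by norm_num))] at hu₂_t
  rw [dt1_dx1_comm (hu.of_le (by norm_num))] at hu₁_t
  refine HasDerivAt.deriv (((((((hη_t.fun_pow 2).fun_add (hu_t.fun_pow 2)).fun_add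
    (hη₁_t.fun_pow 2)).fun_add ((hu₁_t.fun_pow 2).const_mul (1 + ε))).fun_add
      ((hu₂_t.fun_pow 2).const_mul ε)).const_mul (1 / 2)).congr_deriv ?_)
  push_cast
  ring

theorem hasDerivAt_energyFlux (hη : ContDiff ℝ 2 ↿η) (hu : ContDiff ℝ 4 ↿u)
    (heq1 : dt1 η t x + dx1 u t x + ε * dx1 (fun t x => η t x * u t x) t x
      - ε * dx1 (dx1 (dx1 u)) t x = 0)
    (heq2 : dt1 u t x + dx1 η t x + ε * u t x * dx1 u t x = 0) :
    HasDerivAt (energyFlux ε η u t)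
      (dt1 (energyDensity ε η u) t x + ε * cubicRemainder ε η u t x) x := by
  have hu₁ : ContDiff ℝ 3 ↿(dx1 u) := contDiff_dx1 hu (by norm_num)
  have hu₂ : ContDiff ℝ 2 ↿(dx1 (dx1 u)) := contDiff_dx1 hu₁ (by norm_num)
  have hu₃ : ContDiff ℝ 1 ↿(dx1 (dx1 (dx1 u))) := contDiff_dx1 hu₂ (by norm_num)
  have hu_t : ContDiff ℝ 3 ↿(dt1 u) := contDiff_dt1 hu (by norm_num)
  have hu_tx : ContDiff ℝ 2 ↿(dx1 (dt1 u)) := contDiff_dx1 hu_t (by norm_num)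
  have dη := hasDerivAt_dx1 hη two_ne_zero t x
  have dη₁ := hasDerivAt_dx1 (contDiff_dx1 hη (m := 1) (by norm_num)) one_ne_zero t x
  have dη_t := hasDerivAt_dx1 (contDiff_dt1 hη (m := 1) (by norm_num)) one_ne_zero t x
  have du := hasDerivAt_dx1 hu four_ne_zero t x
  have du₁ := hasDerivAt_dx1 hu₁ three_ne_zero t x
  have du₂ := hasDerivAt_dx1 hu₂ two_ne_zero t x
  have du₃ := hasDerivAt_dx1 hu₃ one_ne_zero t x
  have du_t := hasDerivAt_dx1 hu_t three_ne_zero t x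
  have du_tx := hasDerivAt_dx1 hu_tx two_ne_zero t x
  have dηu : dx1 (fun t x => η t x * u t x) t x = dx1 η t x * u t x + η t x * dx1 u t x :=
    (dη.fun_mul du).deriv
  have hη_t_eq : dt1 η t x = ε * dx1 (dx1 (dx1 u)) t x - dx1 u t x
      - ε * (dx1 η t x * u t x + η t x * dx1 u t x) := by
    rw [dηu] at heq1
    linarith
  have hu_t_eq : dt1 u t x = -dx1 η t x - ε * (u t x * dx1 u t x) := by linarith
  refine (((hasDerivAt_flux_of_multipliers (η := η t) (u := u t) ε dη₁ du₁ du₂ du₃ dη_t du_t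
    du_tx).fun_add (hasDerivAt_flux_of_linear_terms ε dη dη₁ du du₁ du₂ du₃)).fun_add
      (((hasDerivAt_flux_of_elevation_transport dη dη₁ du du₁).fun_add
        (hasDerivAt_flux_of_velocity_transport ε du du₁ du₂ du₃)).const_mul ε)).congr_deriv ?_
  rw [dt1_energyDensity ε hη (hu.of_le (by norm_num)), cubicRemainder, hη_t_eq, hu_t_eq]
  ring

theorem energyDensity_eq_zero_of_notMem {K : Set ℝ} (hK : IsClosed K)
    (hη : ∀ x ∉ K, η t x = 0) (hu : ∀ x ∉ K, u t x = 0) :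
    ∀ x ∉ K, energyDensity ε η u t x = 0 := by
  have hη₁ := dx1_eq_zero_of_notMem hK hη
  have hu₁ := dx1_eq_zero_of_notMem hK hu
  have hu₂ := dx1_eq_zero_of_notMem hK hu₁
  intro x hx
  simp [energyDensity, hη x hx, hu x hx, hη₁ x hx, hu₁ x hx, hu₂ x hx]

theorem cubicRemainder_eq_zero_of_notMem {K : Set ℝ} (hK : IsClosed K)
    (hη : ∀ x ∉ K, η t x = 0) (hu : ∀ x ∉ K, u t x = 0) :
    ∀ x ∉ K, cubicRemainder ε η u t x = 0 := by
  have hu₁ := dx1_eq_zero_of_notMem hK hu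
  intro x hx
  simp [cubicRemainder, hη x hx, hu₁ x hx]

theorem energyFlux_eq_zero_of_notMem {K : Set ℝ} (hK : IsClosed K)
    (hη : ∀ x ∉ K, η t x = 0) (hu : ∀ x ∉ K, u t x = 0) :
    ∀ x ∉ K, energyFlux ε η u t x = 0 := by
  have hη₁ := dx1_eq_zero_of_notMem hK hη
  have hu₁ := dx1_eq_zero_of_notMem hK hu
  have hu₂ := dx1_eq_zero_of_notMem hK hu₁
  have hu₃ := dx1_eq_zero_of_notMem hK hu₂
  intro x hx
  simp [energyFlux, hη x hx, hu x hx, hη₁ x hx, hu₁ x hx, hu₂ x hx, hu₃ x hx]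

theorem energy_identity_general {K : Set ℝ} (hK : IsCompact K)
    (hη : ContDiff ℝ 2 ↿η) (hu : ContDiff ℝ 4 ↿u)
    (heq1 : ∀ x, dt1 η t x + dx1 u t x + ε * dx1 (fun t x => η t x * u t x) t x
      - ε * dx1 (dx1 (dx1 u)) t x = 0)
    (heq2 : ∀ x, dt1 u t x + dx1 η t x + ε * u t x * dx1 u t x = 0)
    (hsupp : ∀ᶠ s in 𝓝 t, ∀ x ∉ K, η s x = 0 ∧ u s x = 0) :
    HasDerivAt (fun s => ∫ x, energyDensity ε η u s x)
      (-ε * ∫ x, cubicRemainder ε η u t x) t := by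
  have hη_zero : ∀ᶠ s in 𝓝 t, ∀ x ∉ K, η s x = 0 := hsupp.mono fun _ h x hx => (h x hx).1
  have hu_zero : ∀ᶠ s in 𝓝 t, ∀ x ∉ K, u s x = 0 := hsupp.mono fun _ h x hx => (h x hx).2
  have he_zero : ∀ᶠ s in 𝓝 t, ∀ x ∉ K, energyDensity ε η u s x = 0 := by
    filter_upwards [hη_zero, hu_zero] with s using energyDensity_eq_zero_of_notMem ε hK.isClosed
  have hr_supp : HasCompactSupport (cubicRemainder ε η u t) := .intro hK <|
    cubicRemainder_eq_zero_of_notMem ε hK.isClosed hη_zero.self_of_nhds hu_zero.self_of_nhds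
  have hF_supp : HasCompactSupport (energyFlux ε η u t) := .intro hK <|
    energyFlux_eq_zero_of_notMem ε hK.isClosed hη_zero.self_of_nhds hu_zero.self_of_nhds
  have hr_cont : Continuous (cubicRemainder ε η u t) :=
    continuous_cubicRemainder ε (hη.of_le (by norm_num)) (hu.of_le (by norm_num))
  rw [← integral_const_mul]
  refine hasDerivAt_integral_of_balance_law hK
    (contDiff_energyDensity ε hη (hu.of_le (by norm_num))) he_zero (hr_cont.const_mul (-ε))
    hr_supp.mul_left hF_supp fun x => ?_
  exact (hasDerivAt_energyFlux ε hη hu (heq1 x) (heq2 x)).congr_deriv (by ring)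

end Boussinesq

/-- The energy identity (3.2) of the paper for the 1D Boussinesq system with
`b = c = d = 0`, `a = -1`: the derivative of
`(1/2)∫ (η² + u² + η_x² + (1+ε)u_x² + ε u_{xx}²) dx` equals
`-ε ∫ ((1/2)u_x η² + (3/2)u_x η_x² + η η_x u_{xx} + ((1+ε)/2)u_x³ + (5ε/2)u_x u_{xx}²) dx`. -/
theorem energy_identity (ε T : ℝ) (hε : 0 < ε) (hT : 0 < T)
    (η u : ℝ → ℝ → ℝ)
    (hη : ContDiff ℝ (⊤ : ℕ∞) fun p : ℝ × ℝ => η p.1 p.2)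
    (hu : ContDiff ℝ (⊤ : ℕ∞) fun p : ℝ × ℝ => u p.1 p.2)
    (heq1 : ∀ t x, dt1 η t x + dx1 u t x + ε * dx1 (fun t x => η t x * u t x) t x
      - ε * dx1 (dx1 (dx1 u)) t x = 0)
    (heq2 : ∀ t x, dt1 u t x + dx1 η t x + ε * u t x * dx1 u t x = 0)
    (K : Set ℝ) (hK : IsCompact K)
    (hsupp : ∀ t ∈ Set.Icc (0 : ℝ) T, ∀ x, x ∉ K → η t x = 0 ∧ u t x = 0) :
    ∀ t ∈ Set.Ioo (0 : ℝ) T,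
      HasDerivAt (fun τ => (1 / 2) *
          ∫ x, (η τ x ^ 2 + u τ x ^ 2 + dx1 η τ x ^ 2
            + (1 + ε) * dx1 u τ x ^ 2 + ε * dx1 (dx1 u) τ x ^ 2))
        (-ε * ∫ x, ((1 / 2) * dx1 u t x * η t x ^ 2
          + (3 / 2) * dx1 u t x * dx1 η t x ^ 2
          + η t x * dx1 η t x * dx1 (dx1 u) t x
          + ((1 + ε) / 2) * dx1 u t x ^ 3
          + (5 * ε / 2) * dx1 u t x * dx1 (dx1 u) t x ^ 2)) t := by
  intro t ht
  simpa only [energyDensity, cubicRemainder, integral_const_mul] using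
    energy_identity_general ε hK (contDiff_infty.1 hη 2) (contDiff_infty.1 hu 4) (heq1 t) (heq2 t)
      (eventually_of_mem (Icc_mem_nhds ht.1 ht.2) hsupp)
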